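/- Let X be a real Banach space with a normalized subsymmetric basis (e_i)_{i∈ℕ}. Then no point of S_X is a delta-point. -/

import Mathlib

noncomputable section

variable {X : Type*} [NormedAddCommGroup X] [NormedSpace ℝ X]

/-- `(e, f)` is a normalized 1-unconditional basis of `X` with biorthogonal functionals `f`. -/
structure IsUncondBasis (e : ℕ → X) (f : ℕ → X →L[ℝ] ℝ) : Prop where
  norm_e : ∀ i, ‖e i‖ = 1
  biorth : ∀ i j, f i (e j) = if i = j then (1 : ℝ) else 0
  expand : ∀ x : X, HasSum (fun i => f i x • e i) x
  signs : ∀ (x : X) (θ : ℕ → ℝ), (∀ i, θ i = 1 ∨ θ i = -1) →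
    ∃ y : X, HasSum (fun i => θ i • f i x • e i) y ∧ ‖y‖ = ‖x‖

/-- `(e, f)` is a normalized subsymmetric basis: a 1-unconditional basis such that
moreover spreading the coefficients of any `x` along any strictly increasing sequence
(with any choice of signs) gives a summable family whose sum has the same norm as `x`. -/
structure IsSubsymmetricBasis (e : ℕ → X) (f : ℕ → X →L[ℝ] ℝ)
    extends IsUncondBasis e f : Prop where
  subsym : ∀ (x : X) (θ : ℕ → ℝ) (k : ℕ → ℕ), (∀ i, θ i = 1 ∨ θ i = -1) → StrictMono k →
    ∃ y : X, HasSum (fun i => θ i • f i x • e (k i)) y ∧ ‖y‖ = ‖x‖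

/-- `Δ_ε(x)`: the set of elements of the closed unit ball that are at distance
at least `2 - ε` from `x`. -/
def deltaSet (x : X) (ε : ℝ) : Set X :=
  {y | ‖y‖ ≤ 1 ∧ 2 - ε ≤ ‖x - y‖}

/-- `x` is a delta-point if for every `ε > 0` the point `x` belongs to the closed
convex hull of `Δ_ε(x)`. -/
def IsDeltaPoint (x : X) : Prop :=
  ∀ ε : ℝ, 0 < ε → x ∈ closure (convexHull ℝ (deltaSet x ε))

/-!
Let `n` be a coordinate of `x` strictly dominating all later ones. For `y` in the unit ball let `B`
be the set of `i ≤ n` with `y i * x i < x i ^ 2 / 2`. On `[0, n] \ B` one has `|x i - y i| ≤ |y i|`,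
so `‖x - y‖ ≤ ‖x - P x‖ + ‖y‖`, where `P` projects onto `[0, n] \ B`. There are finitely many sets
`B`; hence if `y` is almost at distance two from `x`, then erasing `[0, n] \ B` from `x` does not
change its norm.

If `n ∉ B`, subsymmetry bootstraps this: as `x n` is erased, erasing a later coordinate `j` as well
cannot lower the norm, for otherwise the value at `j`, being smaller than `x n`, could be raised to
`x n` and moved into the gap at `n`, and convexity of the norm would give a contradiction. So the
projection of `x` onto `B` already has norm one, and a functional norming it takes the value `1` at
`x` but at most `1 / 2` at `y`. If `n ∈ B`, it is the `n`-th coordinate that separates `y` from `x`.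
A large multiple of the finitely many norming functionals plus the coordinate functional therefore
separates `x` from the whole set `Δ_ε(x)`.
-/

open Filter Topology

theorem exists_lt_forall_lt_of_lt {ι α : Type*} [LinearOrder α] [DenselyOrdered α] [NoMinOrder α]
    (s : Finset ι) (N : ι → α) (a : α) : ∃ r < a, ∀ i ∈ s, N i < a → N i < r := by
  obtain ⟨b, hb⟩ := exists_lt a
  obtain ⟨r, hr, hra⟩ := Finset.exists_between
    (Finset.insert_nonempty b ((s.filter (N · < a)).image N)) (Finset.singleton_nonempty a)
    (by grind)
  exact ⟨r, by grind, by grind⟩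

theorem notMem_closure_convexHull_of_le_or_exists_le_sub {E ι : Type*} [AddCommGroup E] [Module ℝ E]
    [TopologicalSpace E] {C : Set E} {x : E} {I : Finset ι} {g : ι → E →L[ℝ] ℝ} {φ : E →L[ℝ] ℝ}
    {a b δ : ℝ} (hδ : 0 < δ) (hg : ∀ i ∈ I, ∀ y ∈ C, g i y ≤ g i x) (hφ : ∀ y ∈ C, φ y ≤ b)
    (hx : a < φ x) (h : ∀ y ∈ C, φ y ≤ a ∨ ∃ i ∈ I, g i y ≤ g i x - δ) :
    x ∉ closure (convexHull ℝ C) := by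
  obtain ⟨M, hM₀, hM⟩ : ∃ M : ℝ, 0 ≤ M ∧ b - a ≤ M * δ :=
    ⟨max 0 ((b - a) / δ), le_max_left _ _, (div_le_iff₀ hδ).mp (le_max_right _ _)⟩
  let H : E →L[ℝ] ℝ := M • ∑ i ∈ I, g i + φ
  have hH (z : E) : H z = M * ∑ i ∈ I, g i z + φ z := by simp [H]
  have hC : ∀ y ∈ C, H y ≤ M * ∑ i ∈ I, g i x + a := by
    intro y hy
    rw [hH]
    rcases h y hy with hya | ⟨i, hi, hyi⟩
    · gcongr with i hi
      exact hg i hi y hy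
    · have hgap : δ ≤ ∑ i ∈ I, g i x - ∑ i ∈ I, g i y := by
        rw [← Finset.sum_sub_distrib]
        exact (by linarith : δ ≤ g i x - g i y).trans <|
          Finset.single_le_sum (f := fun i => g i x - g i y)
            (fun i hi => sub_nonneg.mpr (hg i hi y hy)) hi
      linarith [hφ y hy, mul_le_mul_of_nonneg_left hgap hM₀]
  have hclosed : IsClosed {z | H z ≤ M * ∑ i ∈ I, g i x + a} :=
    isClosed_le H.continuous continuous_const
  have hconvex := convex_halfSpace_le H.toLinearMap.isLinear (M * ∑ i ∈ I, g i x + a)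
  intro hmem
  have hHx : H x ≤ _ := closure_minimal (convexHull_min hC hconvex) hclosed hmem
  rw [hH] at hHx
  linarith

theorem norm_add_smul_lt {w v : X} {r t : ℝ} (ht : |t| < 1) (hw : ‖w‖ < r) (hadd : ‖w + v‖ ≤ r)
    (hsub : ‖w - v‖ ≤ r) : ‖w + t • v‖ < r := by
  have hcombo {u : X} (hu : ‖w + u‖ ≤ r) : ‖w + |t| • u‖ < r :=
    calc ‖w + |t| • u‖ = ‖(1 - |t|) • w + |t| • (w + u)‖ := by congr 1; module
      _ ≤ (1 - |t|) * ‖w‖ + |t| * ‖w + u‖ := by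
        refine (norm_add_le _ _).trans_eq ?_
        rw [norm_smul, norm_smul, Real.norm_of_nonneg (sub_nonneg.mpr ht.le), norm_abs_eq_norm,
          Real.norm_eq_abs]
      _ < r := by nlinarith [abs_nonneg t]
  rcases abs_choice t with h | h
  · simpa [h] using hcombo hadd
  · simpa [h] using hcombo (u := -v) (by rwa [← sub_eq_add_neg])

namespace IsUncondBasis

variable {e : ℕ → X} {f : ℕ → X →L[ℝ] ℝ}

/-- A 1-unconditional basis as an unconditional Schauder basis in the sense of Mathlib, which
provides the projections onto finite sets of coordinates. -/
def schauderBasis (hb : IsUncondBasis e f) : UnconditionalSchauderBasis ℕ ℝ X where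
  basis := e
  coord := f
  ortho i j := by simp [hb.biorth, Pi.single_apply]
  expansion := hb.expand

/-- The projection onto the coordinates in the finite set `s`. -/
def proj (hb : IsUncondBasis e f) (s : Finset ℕ) : X →L[ℝ] X :=
  hb.schauderBasis.proj s

theorem proj_apply (hb : IsUncondBasis e f) (s : Finset ℕ) (x : X) :
    hb.proj s x = ∑ i ∈ s, f i x • e i :=
  hb.schauderBasis.proj_apply s x

theorem coord_proj (hb : IsUncondBasis e f) (s : Finset ℕ) (x : X) (i : ℕ) :
    f i (hb.proj s x) = if i ∈ s then f i x else 0 := by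
  simp [hb.proj_apply, hb.biorth]

theorem coord_sub_proj (hb : IsUncondBasis e f) (s : Finset ℕ) (x : X) (i : ℕ) :
    f i (x - hb.proj s x) = if i ∈ s then 0 else f i x := by
  rw [map_sub, hb.coord_proj]
  split_ifs <;> simp

theorem norm_sub_two_mul_coord_smul (hb : IsUncondBasis e f) (x : X) (i : ℕ) :
    ‖x - (2 * f i x) • e i‖ = ‖x‖ := by
  obtain ⟨y, hy, hyx⟩ := hb.signs x (fun j => if j = i then -1 else 1)
    fun j => (ite_eq_or_eq _ _ _).symm
  have hflip := (hb.expand x).sub (hasSum_ite_eq i ((2 * f i x) • e i))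
  rw [← hyx, hflip.unique]
  convert hy using 2 with j
  split_ifs with h
  · subst h
    module
  · simp

theorem norm_add_sub_coord_smul_le (hb : IsUncondBasis e f) {x : X} {i : ℕ} {c : ℝ}
    (hc : |c| ≤ |f i x|) : ‖x + (c - f i x) • e i‖ ≤ ‖x‖ := by
  rcases eq_or_ne (f i x) 0 with h₀ | h₀
  · obtain rfl : c = 0 := by simpa [h₀] using hc
    simp [h₀]
  obtain ⟨t, rfl⟩ : ∃ t, c = t * f i x := ⟨c / f i x, by field_simp⟩
  obtain ⟨ht₁, ht₂⟩ : -1 ≤ t ∧ t ≤ 1 := by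
    rw [← abs_le]
    rw [abs_mul] at hc
    exact (mul_le_iff_le_one_left (abs_pos.mpr h₀)).mp hc
  calc ‖x + (t * f i x - f i x) • e i‖
      = ‖((1 + t) / 2) • x + ((1 - t) / 2) • (x - (2 * f i x) • e i)‖ := by congr 1; module
    _ ≤ (1 + t) / 2 * ‖x‖ + (1 - t) / 2 * ‖x‖ := by
      refine (norm_add_le _ _).trans_eq ?_
      rw [norm_smul, norm_smul, hb.norm_sub_two_mul_coord_smul, Real.norm_of_nonneg (by linarith),
        Real.norm_of_nonneg (by linarith)]
    _ = ‖x‖ := by ring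

theorem norm_le_of_abs_coord_le (hb : IsUncondBasis e f) {w x : X} (h : ∀ i, |f i w| ≤ |f i x|) :
    ‖w‖ ≤ ‖x‖ := by
  have hfin (s : Finset ℕ) : ‖x + hb.proj s (w - x)‖ ≤ ‖x‖ := by
    induction s using Finset.induction_on with
    | empty => simp [hb.proj_apply]
    | insert i s hi ih =>
      have hcoord : f i (x + hb.proj s (w - x)) = f i x := by simp [hb.coord_proj, hi]
      have hinsert : x + hb.proj (insert i s) (w - x) =
          x + hb.proj s (w - x) + (f i w - f i (x + hb.proj s (w - x))) • e i := by
        rw [hcoord, hb.proj_apply, Finset.sum_insert hi, ← hb.proj_apply, map_sub]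
        abel
      rw [hinsert]
      exact (hb.norm_add_sub_coord_smul_le (by rw [hcoord]; exact h i)).trans ih
  have hlim : Tendsto (fun s => ‖x + hb.proj s (w - x)‖) atTop (𝓝 ‖w‖) := by
    simpa [proj_apply] using ((hb.expand (w - x)).const_add x).norm
  exact le_of_tendsto' hlim hfin

theorem norm_proj_le (hb : IsUncondBasis e f) (s : Finset ℕ) (x : X) : ‖hb.proj s x‖ ≤ ‖x‖ :=
  hb.norm_le_of_abs_coord_le fun i => by rw [hb.coord_proj]; split_ifs <;> simp

theorem norm_sub_proj_le (hb : IsUncondBasis e f) (s : Finset ℕ) (x : X) :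
    ‖x - hb.proj s x‖ ≤ ‖x‖ :=
  hb.norm_le_of_abs_coord_le fun i => by rw [hb.coord_sub_proj]; split_ifs <;> simp

theorem exists_forall_gt_abs_coord_lt (hb : IsUncondBasis e f) {x : X} (hx : x ≠ 0) :
    ∃ n, ∀ j, n < j → |f j x| < |f n x| := by
  obtain ⟨m, hm⟩ : ∃ m, f m x ≠ 0 := by
    by_contra! h
    exact hx ((hb.expand x).unique (by simp [h, hasSum_zero]))
  have hzero : Tendsto (fun j => |f j x|) cofinite (𝓝 0) := by
    simpa [norm_smul, hb.norm_e] using (hb.expand x).summable.tendsto_cofinite_zero.norm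
  have hfin : {j | |f m x| ≤ |f j x|}.Finite := by
    simpa using eventually_cofinite.mp (hzero.eventually_lt_const (abs_pos.mpr hm))
  obtain ⟨n, hn, hmax⟩ := hfin.exists_maximal ⟨m, le_refl |f m x|⟩
  refine ⟨n, fun j hnj => lt_of_lt_of_le (not_le.mp fun hj => ?_) hn⟩
  exact hnj.not_ge (hmax hj hnj.le)

theorem norm_sub_le_norm_sub_proj_add (hb : IsUncondBasis e f) {x y : X} {s : Finset ℕ}
    (h : ∀ i ∈ s, f i x ^ 2 / 2 ≤ f i y * f i x) : ‖x - y‖ ≤ ‖x - hb.proj s x‖ + ‖y‖ := by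
  refine le_trans (hb.norm_le_of_abs_coord_le fun i => ?_) (norm_sub_le _ _)
  rw [map_sub, map_sub, hb.coord_sub_proj]
  split_ifs with hi
  · exact sq_le_sq.mp (by linarith [h i hi])
  · rfl

theorem coord_mul_apply_nonneg_of_norming (hb : IsUncondBasis e f) {φ : X →L[ℝ] ℝ} {u : X}
    (hφ : ‖φ‖ ≤ 1) (hu : φ u = ‖u‖) (i : ℕ) : 0 ≤ f i u * φ (e i) := by
  have herase : φ (u - f i u • e i) ≤ φ u :=
    calc φ (u - f i u • e i) ≤ ‖φ (u - f i u • e i)‖ := Real.le_norm_self _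
      _ ≤ ‖u - f i u • e i‖ := by simpa using φ.le_of_opNorm_le hφ (u - f i u • e i)
      _ ≤ φ u := by simpa [hb.proj_apply, hu] using hb.norm_sub_proj_le {i} u
  simpa using herase

theorem exists_norming_proj (hb : IsUncondBasis e f) (x : X) (B : Finset ℕ) :
    ∃ g : X →L[ℝ] ℝ, g x = ‖hb.proj B x‖ ∧ (∀ y, g y ≤ ‖y‖) ∧
      ∀ (c : ℝ) (y : X), (∀ i ∈ B, f i y * f i x < c * f i x ^ 2) → g y ≤ c * g x := by
  obtain ⟨φ, hφ, hφx⟩ := exists_dual_vector'' ℝ (hb.proj B x)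
  rw [RCLike.ofReal_real_eq_id, id] at hφx
  refine ⟨φ.comp (hb.proj B), hφx, fun y => ?_, fun c y hy => ?_⟩
  · calc φ (hb.proj B y) ≤ ‖φ (hb.proj B y)‖ := Real.le_norm_self _
      _ ≤ ‖hb.proj B y‖ := by simpa using φ.le_of_opNorm_le hφ (hb.proj B y)
      _ ≤ ‖y‖ := hb.norm_proj_le B y
  · simp only [ContinuousLinearMap.comp_apply, hb.proj_apply, map_sum, map_smul, smul_eq_mul,
      Finset.mul_sum]
    refine Finset.sum_le_sum fun i hi => ?_
    have hpos : 0 ≤ f i x * φ (e i) := by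
      simpa [hb.coord_proj, hi] using hb.coord_mul_apply_nonneg_of_norming hφ hφx i
    have hxi : f i x ≠ 0 := fun h₀ => by simpa [h₀] using hy i hi
    refine le_of_mul_le_mul_right ?_ (sq_pos_of_ne_zero hxi)
    linarith [mul_le_mul_of_nonneg_left (hy i hi).le hpos]

end IsUncondBasis

namespace IsSubsymmetricBasis

variable {e : ℕ → X} {f : ℕ → X →L[ℝ] ℝ}

theorem norm_add_smul_spread (hb : IsSubsymmetricBasis e f) {w y : X} {k : ℕ → ℕ}
    (hk : StrictMono k) (hy : HasSum (fun i => f i w • e (k i)) y) (c : ℝ) (i : ℕ) :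
    ‖y + c • e (k i)‖ = ‖w + c • e i‖ := by
  obtain ⟨z, hz, hzw⟩ := hb.subsym (w + c • e i) (fun _ => 1) k (fun _ => Or.inl rfl) hk
  rw [← hzw, (hy.add (hasSum_ite_eq i (c • e (k i)))).unique]
  convert hz using 2 with j
  by_cases hj : j = i
  · subst hj
    simp [hb.biorth, add_smul]
  · simp [hb.biorth, hj]

theorem norm_add_smul_eq_of_gap (hb : IsSubsymmetricBasis e f) {w : X} {i j : ℕ} (hij : i ≤ j)
    (hw : ∀ l, i ≤ l → l ≤ j → f l w = 0) (c : ℝ) : ‖w + c • e j‖ = ‖w + c • e i‖ := by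
  -- Spreading `w` by `k` or by `k'` yields the same vector, as `w` vanishes on `[i, j]`, but `k`
  -- carries `i` to `j` while `k'` fixes `j`.
  let k : ℕ → ℕ := fun l => if l < i then l else l + (j - i)
  let k' : ℕ → ℕ := fun l => if l ≤ j then l else l + (j - i)
  have hk : StrictMono k := fun a b hab => by grind
  have hk' : StrictMono k' := fun a b hab => by grind
  have hki : k i = j := by grind
  have hk'j : k' j = j := by grind
  obtain ⟨y, hy, -⟩ := hb.subsym w (fun _ => 1) k (fun _ => Or.inl rfl) hk
  simp only [one_smul] at hy
  have hy' : HasSum (fun l => f l w • e (k' l)) y := by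
    convert hy using 2 with l
    by_cases hl : i ≤ l ∧ l ≤ j
    · simp [hw l hl.1 hl.2]
    · have hkl : k' l = k l := by grind
      rw [hkl]
  calc ‖w + c • e j‖ = ‖y + c • e j‖ := by rw [← hb.norm_add_smul_spread hk' hy' c j, hk'j]
    _ = ‖w + c • e i‖ := by rw [← hb.norm_add_smul_spread hk hy c i, hki]

theorem norm_sub_proj_insert (hb : IsSubsymmetricBasis e f) {x : X} {n j : ℕ} {s : Finset ℕ}
    (hnj : n < j) (hlt : |f j x| < |f n x|) (hs : ∀ l, n ≤ l → l < j → l ∈ s)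
    (h : ‖x - hb.proj s x‖ = ‖x‖) : ‖x - hb.proj (insert j s) x‖ = ‖x‖ := by
  by_cases hj : j ∈ s
  · rwa [Finset.insert_eq_of_mem hj]
  set w := x - hb.proj (insert j s) x with hw
  have hx₀ : f n x ≠ 0 := abs_pos.mp ((abs_nonneg _).trans_lt hlt)
  have hsplit : x - hb.proj s x = w + (f j x / f n x) • f n x • e j := by
    rw [smul_smul, div_mul_cancel₀ _ hx₀, hw, hb.proj_apply, hb.proj_apply, Finset.sum_insert hj]
    abel
  have hgap (l : ℕ) (hnl : n ≤ l) (hlj : l ≤ j) : f l w = 0 := by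
    rw [hb.coord_sub_proj, if_pos]
    rcases hlj.eq_or_lt with rfl | hlj
    exacts [Finset.mem_insert_self _ _, Finset.mem_insert_of_mem (hs l hnl hlj)]
  have hmoved {c : ℝ} (hc : |c| = |f n x|) : ‖w + c • e j‖ ≤ ‖x‖ := by
    rw [hb.norm_add_smul_eq_of_gap hnj.le hgap]
    refine hb.norm_le_of_abs_coord_le fun l => ?_
    rcases eq_or_ne l n with rfl | hl
    · simp [hb.biorth, hgap l le_rfl hnj.le, hc]
    · rw [map_add, hb.coord_sub_proj]
      split_ifs <;> simp [hb.biorth, hl]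
  refine (hb.norm_sub_proj_le _ x).eq_of_not_lt fun hwx => h.not_lt ?_
  rw [hsplit]
  refine norm_add_smul_lt ?_ hwx (hmoved rfl) ?_
  · rwa [abs_div, div_lt_one (abs_pos.mpr hx₀)]
  · rw [sub_eq_add_neg, ← neg_smul]
    exact hmoved (abs_neg _)

theorem norm_proj_eq_of_norm_sub_proj_eq (hb : IsSubsymmetricBasis e f) {x : X} {n : ℕ}
    (hn : ∀ j, n < j → |f j x| < |f n x|) {B : Finset ℕ} (hB : ∀ i ∈ B, i < n)
    (h : ‖x - hb.proj (Finset.range (n + 1) \ B) x‖ = ‖x‖) : ‖hb.proj B x‖ = ‖x‖ := by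
  have htail (m : ℕ) (hm : n + 1 ≤ m) : ‖x - hb.proj (Finset.range m \ B) x‖ = ‖x‖ := by
    induction m, hm using Nat.le_induction with
    | base => exact h
    | succ m hm ih =>
      have hmB : m ∉ B := fun hmB => by grind
      rw [Finset.range_add_one, Finset.insert_sdiff_of_notMem _ hmB]
      exact hb.norm_sub_proj_insert hm (hn m hm) (fun l hnl hlm => by grind) ih
  have hlim : Tendsto (fun m => ‖x - hb.proj (Finset.range m \ B) x‖) atTop
      (𝓝 ‖hb.proj B x‖) := by
    have hsum := (((hb.expand x).tendsto_sum_nat.const_sub x).add_const (hb.proj B x)).norm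
    rw [sub_self, zero_add] at hsum
    refine hsum.congr' ?_
    filter_upwards [eventually_ge_atTop n] with m hm
    have hBm : B ⊆ Finset.range m := fun i hi => by grind
    rw [hb.proj_apply, hb.proj_apply, ← Finset.sum_sdiff hBm]
    congr 1
    abel
  exact tendsto_nhds_unique hlim
    (tendsto_const_nhds.congr' (eventually_atTop.mpr ⟨n + 1, fun m hm => (htail m hm).symm⟩))

theorem exists_deltaSet_coord_dichotomy (hb : IsSubsymmetricBasis e f) {x : X} (hx : ‖x‖ = 1)
    {n : ℕ} (hn : ∀ j, n < j → |f j x| < |f n x|) :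
    ∃ ε > 0, ∀ y ∈ deltaSet x ε, f n y * f n x ≤ f n x ^ 2 / 2 ∨
      ∃ B ⊆ Finset.range n, ‖hb.proj B x‖ = 1 ∧ ∀ i ∈ B, f i y * f i x < f i x ^ 2 / 2 := by
  obtain ⟨r, hr, hgap⟩ := exists_lt_forall_lt_of_lt (Finset.range (n + 1)).powerset
    (fun s => ‖x - hb.proj s x‖) 1
  refine ⟨1 - r, sub_pos.mpr hr, fun y ⟨hy, hxy⟩ => or_iff_not_imp_left.mpr fun hyn => ?_⟩
  let B := (Finset.range (n + 1)).filter fun i => f i y * f i x < f i x ^ 2 / 2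
  have hBn : ∀ i ∈ B, i < n := fun i hi => by
    obtain ⟨hin, hlt⟩ := Finset.mem_filter.mp hi
    refine (Finset.mem_range_succ_iff.mp hin).lt_of_ne ?_
    rintro rfl
    exact hyn hlt.le
  have hdist : ‖x - y‖ ≤ ‖x - hb.proj (Finset.range (n + 1) \ B) x‖ + ‖y‖ :=
    hb.norm_sub_le_norm_sub_proj_add fun i hi => by grind
  have herase : ‖x - hb.proj (Finset.range (n + 1) \ B) x‖ = ‖x‖ := by
    refine (hb.norm_sub_proj_le _ x).eq_of_not_lt fun hlt => ?_
    have hlt_r := hgap _ (Finset.mem_powerset.mpr Finset.sdiff_subset) (hlt.trans_eq hx)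
    linarith
  exact ⟨B, fun i hi => Finset.mem_range.mpr (hBn i hi),
    (hb.norm_proj_eq_of_norm_sub_proj_eq hn hBn herase).trans hx,
    fun i hi => (Finset.mem_filter.mp hi).2⟩

end IsSubsymmetricBasis

theorem no_deltaPoint_of_subsymmetric_general (e : ℕ → X) (f : ℕ → X →L[ℝ] ℝ)
    (hb : IsSubsymmetricBasis e f) (x : X) (hx : ‖x‖ = 1) : ¬ IsDeltaPoint x := by
  obtain ⟨n, hn⟩ := hb.exists_forall_gt_abs_coord_lt (x := x) (by rintro rfl; simp at hx)
  have hxn : 0 < f n x ^ 2 := sq_pos_of_ne_zero <|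
    abs_pos.mp ((abs_nonneg _).trans_lt (hn (n + 1) n.lt_succ_self))
  obtain ⟨ε, hε, hsep⟩ := hb.exists_deltaSet_coord_dichotomy hx hn
  choose g hgx hg hghalf using hb.exists_norming_proj x
  let 𝓑 := (Finset.range n).powerset.filter fun B => ‖hb.proj B x‖ = 1
  have h𝓑 : ∀ B ∈ 𝓑, g B x = 1 := fun B hB => (hgx B).trans (Finset.mem_filter.mp hB).2
  have hball : ∀ y ∈ deltaSet x ε, (f n x • f n) y ≤ ‖f n x • f n‖ := fun y hy =>
    (le_abs_self _).trans ((f n x • f n).unit_le_opNorm y hy.1)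
  refine fun hdelta => notMem_closure_convexHull_of_le_or_exists_le_sub (I := 𝓑) one_half_pos
    (fun B hB y hy => ((hg B y).trans hy.1).trans_eq (h𝓑 B hB).symm) hball
    (a := f n x ^ 2 / 2) ?_ (fun y hy => ?_) (hdelta ε hε)
  · simpa [sq] using half_lt_self hxn
  · refine (hsep y hy).imp (by simp [mul_comm]) fun ⟨B, hBn, hB, hyB⟩ => ?_
    have hB𝓑 : B ∈ 𝓑 := Finset.mem_filter.mpr ⟨Finset.mem_powerset.mpr hBn, hB⟩
    have hgy : g B y ≤ 1 / 2 * g B x := hghalf B (1 / 2) y fun i hi => by linarith [hyB i hi]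
    exact ⟨B, hB𝓑, by linarith [h𝓑 B hB𝓑]⟩

/-- A Banach space with a normalized subsymmetric basis has no delta-points. -/
theorem no_deltaPoint_of_subsymmetric [CompleteSpace X] (e : ℕ → X) (f : ℕ → X →L[ℝ] ℝ)
    (hb : IsSubsymmetricBasis e f) (x : X) (hx : ‖x‖ = 1) : ¬ IsDeltaPoint x :=
  no_deltaPoint_of_subsymmetric_general e f hb x hx
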